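/- Let k be a differential field of characteristic zero whose field of constants C is algebraically closed, let k ⊂ K ⊆ E be differential fields such that E is a Picard–Vessiot extension of k (for some monic linear differential operator over k) and K is a k-irreducible differential field. Then there exist a nonzero element y ∈ E and a monic linear differential operator L over k such that L(y) = 0, the element y′/y lies in K, and K is a finite algebraic extension of the differential subfield k⟨y′/y⟩. -/

import Mathlib

universe u

/-- A bundled differential field of characteristic zero: a field together with a derivation,
given as a raw function satisfying additivity and the Leibniz rule. -/
structure DFld : Type (u + 1) where
  carrier : Type u
  [fieldInst : Field carrier]
  [charZeroInst : CharZero carrier]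
  deriv : carrier → carrier
  deriv_add : ∀ a b, deriv (a + b) = deriv a + deriv b
  deriv_mul : ∀ a b, deriv (a * b) = deriv a * b + a * deriv b

attribute [instance] DFld.fieldInst DFld.charZeroInst

/-- The result of applying the monic linear differential operator
`∂^n + a_{n-1} ∂^{n-1} + ⋯ + a_1 ∂ + a_0` (with coefficients `a`) to `y`,
where the derivation is given by `D`. -/
def LApply {E : Type u} [Field E] (D : E → E) (n : ℕ) (a : Fin n → E) (y : E) : E :=
  D^[n] y + ∑ i : Fin n, a i * D^[(i : ℕ)] y

/-- `diffGen D k S` is the smallest differential subfield (w.r.t. the derivation `D`)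
containing the subfield `k` and the set `S`; i.e. the differential field `k⟨S⟩`. -/
def diffGen {E : Type u} [Field E] (D : E → E) (k : Subfield E) (S : Set E) : Subfield E :=
  sInf {F : Subfield E | k ≤ F ∧ S ⊆ ↑F ∧ ∀ x ∈ F, D x ∈ F}

/-- The subfield of constants of a differential subfield `k`: `{x ∈ k | D x = 0}`. -/
def constantsOf {E : Type u} [Field E] (D : Derivation ℤ E E) (k : Subfield E) : Subfield E where
  carrier := {x | x ∈ k ∧ D x = 0}
  zero_mem' := ⟨k.zero_mem, map_zero D⟩
  one_mem' := ⟨k.one_mem, D.map_one_eq_zero⟩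
  add_mem' := by
    rintro a b ⟨hak, ha0⟩ ⟨hbk, hb0⟩
    exact ⟨k.add_mem hak hbk, by rw [map_add, ha0, hb0, add_zero]⟩
  neg_mem' := by
    rintro a ⟨hak, ha0⟩
    exact ⟨k.neg_mem hak, by rw [map_neg, ha0, neg_zero]⟩
  mul_mem' := by
    rintro a b ⟨hak, ha0⟩ ⟨hbk, hb0⟩
    exact ⟨k.mul_mem hak hbk, by
      rw [Derivation.leibniz, ha0, hb0, smul_zero, smul_zero, add_zero]⟩
  inv_mem' := by
    rintro x ⟨hxk, hx0⟩
    refine ⟨k.inv_mem hxk, ?_⟩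
    by_cases h : x = 0
    · simp [h]
    · have h1 : D (x * x⁻¹) = 0 := by rw [mul_inv_cancel₀ h, D.map_one_eq_zero]
      rw [Derivation.leibniz, hx0, smul_zero, add_zero, smul_eq_mul] at h1
      exact (mul_eq_zero.mp h1).resolve_left h

/-- `F` is a Picard–Vessiot extension of `k` (inside a common differential field) for the
monic linear differential operator of order `n` with (lower-order) coefficients `a`:
both are differential subfields, the constants of `F` equal the constants of `k`,
the coefficients lie in `k`, and `F` is differentially generated over `k` by an
`n`-dimensional vector space (over the constants) of solutions. -/
def IsPVWith {E : Type u} [Field E] (D : E → E) (k F : Subfield E) (n : ℕ)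
    (a : Fin n → E) : Prop :=
  k ≤ F ∧ (∀ x ∈ k, D x ∈ k) ∧ (∀ x ∈ F, D x ∈ F) ∧
  (∀ x ∈ F, D x = 0 → x ∈ k) ∧
  (∀ i, a i ∈ k) ∧
  ∃ y : Fin n → E,
    (∀ i, y i ∈ F) ∧
    (∀ i, LApply D n a (y i) = 0) ∧
    (∀ c : Fin n → E, (∀ i, c i ∈ k ∧ D (c i) = 0) → (∑ i, c i * y i) = 0 → ∀ i, c i = 0) ∧
    diffGen D k (Set.range y) = F

/-- `F` is a Picard–Vessiot extension of `k` for some monic linear differential operator. -/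
def IsPV {E : Type u} [Field E] (D : E → E) (k F : Subfield E) : Prop :=
  ∃ (n : ℕ) (a : Fin n → E), IsPVWith D k F n a

/-- Relative version: the differential subfield `F` is a Picard–Vessiot extension
of the differential subfield `kb ≤ F`. -/
def IsPVRel {E : Type u} [Field E] (D : E → E) (kb F : Subfield E)
    (hF : ∀ x ∈ F, D x ∈ F) : Prop :=
  IsPV (fun x : ↥F => (⟨D ↑x, hF ↑x x.2⟩ : ↥F)) (Subfield.comap F.subtype kb) ⊤

/-- The ambient differential field (with derivation `D`) is a strongly normal extension of
its differential subfield `k`: it is finitely generated as a field extension of `k`, has no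
new constants, and every differential embedding over `k` into a differential field extension
`M` lands in the compositum of the image of the base copy with the constants of `M`. -/
def IsSN {E : Type u} [Field E] (D : E → E) (k : Subfield E) : Prop :=
  (∀ x ∈ k, D x ∈ k) ∧
  (∃ s : Finset E, Subfield.closure (↑k ∪ ↑s) = (⊤ : Subfield E)) ∧
  (∀ x : E, D x = 0 → x ∈ k) ∧
  ∀ (M : DFld.{u}) (ι σ : E →+* M.carrier),
    (∀ x, ι (D x) = M.deriv (ι x)) →
    (∀ x, σ (D x) = M.deriv (σ x)) →
    (∀ x ∈ k, σ x = ι x) →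
    ∀ e : E, σ e ∈ Subfield.closure (Set.range ι ∪ {m : M.carrier | M.deriv m = 0})

/-- Relative version: the differential subfield `F` is a strongly normal extension of the
differential subfield `kb ≤ F`. -/
def IsSNRel {E : Type u} [Field E] (D : E → E) (kb F : Subfield E)
    (hF : ∀ x ∈ F, D x ∈ F) : Prop :=
  IsSN (fun x : ↥F => (⟨D ↑x, hF ↑x x.2⟩ : ↥F)) (Subfield.comap F.subtype kb)

/-- `K` is a finite field extension of the subfield `M`. -/
def FinExt {E : Type u} [Field E] (M K : Subfield E) : Prop :=
  ∃ h : M ≤ K,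
    letI : Algebra ↥M ↥K := (Subfield.inclusion h).toAlgebra
    Module.Finite ↥M ↥K

/-- The transcendence degree of the subfield `K` over the subfield `k`, as the supremum of the
cardinalities of subsets of `K` that are algebraically independent over `k`. -/
noncomputable def trdegOf {E : Type u} [Field E] (k K : Subfield E) : Cardinal.{u} :=
  ⨆ s : {s : Set E // s ⊆ (K : Set E) ∧ AlgebraicIndependent ↥k (fun x : ↥s => (x : E))},
    Cardinal.mk ↥(s.1)

/-- `K` and `M` are free over `k`: every finite subset of `K` that is algebraically
independent over `k` remains algebraically independent over `M`. -/
def FreeOver {E : Type u} [Field E] (k K M : Subfield E) : Prop :=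
  ∀ s : Finset E, (↑s : Set E) ⊆ (K : Set E) →
    AlgebraicIndependent ↥k (fun x : ↥(↑s : Set E) => (x : E)) →
    AlgebraicIndependent ↥M (fun x : ↥(↑s : Set E) => (x : E))

/-- `K` is a `k`-irreducible differential field: it is a finitely generated differential field
extension of `k` of transcendence degree at least 1, and every intermediate differential field
`k ⊂ M ⊆ K` has transcendence degree `0` or `trdeg(K|k)` over `k`. -/
def IsIrred {E : Type u} [Field E] (D : E → E) (k K : Subfield E) : Prop :=
  (∃ s : Finset E, diffGen D k ↑s = K) ∧
  1 ≤ trdegOf k K ∧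
  ∀ M : Subfield E, (∀ x ∈ M, D x ∈ M) → k < M → M ≤ K →
    trdegOf k M = 0 ∨ trdegOf k M = trdegOf k K

/-- `Kf` is a `d`-solvable extension of `k`: there is a tower of differential fields starting
at (a copy of) `k`, each step being a finite algebraic extension or a Picard–Vessiot extension
for an operator of order at most `d`, whose top contains (the copy of) `Kf`. -/
def IsDSolvable {E : Type u} [Field E] (D : E → E) (k Kf : Subfield E) (d : ℕ) : Prop :=
  ∃ (Ω : DFld.{u}) (j : E →+* Ω.carrier),
    (∀ x, j (D x) = Ω.deriv (j x)) ∧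
    ∃ (r : ℕ) (T : Fin (r + 1) → Subfield Ω.carrier),
      T 0 = Subfield.map j k ∧
      Subfield.map j Kf ≤ T (Fin.last r) ∧
      (∀ i, ∀ x ∈ T i, Ω.deriv x ∈ T i) ∧
      ∀ i : Fin r,
        FinExt (T i.castSucc) (T i.succ) ∨
        ∃ n ≤ d, ∃ a : Fin n → Ω.carrier, IsPVWith Ω.deriv (T i.castSucc) (T i.succ) n a

/-- `Kn` is generated over `kb`, as a differential field with the same constants, by one
solution `z` of an inhomogeneous equation `L(y) = b` (with `L` monic over `kb` of order
`n ≤ d` and `b ∈ kb`) together with an `n`-dimensional space (over the constants) of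
solutions of `L(y) = 0`. -/
def IsPVInhomLe {E : Type u} [Field E] (D : E → E) (kb Kn : Subfield E) (d : ℕ) : Prop :=
  kb ≤ Kn ∧ (∀ x ∈ kb, D x ∈ kb) ∧ (∀ x ∈ Kn, D x ∈ Kn) ∧
  (∀ x ∈ Kn, D x = 0 → x ∈ kb) ∧
  ∃ n, n ≤ d ∧ ∃ (a : Fin n → E) (b z : E) (y : Fin n → E),
    (∀ i, a i ∈ kb) ∧ b ∈ kb ∧ z ∈ Kn ∧ (∀ i, y i ∈ Kn) ∧
    LApply D n a z = b ∧
    (∀ i, LApply D n a (y i) = 0) ∧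
    (∀ c : Fin n → E, (∀ i, c i ∈ kb ∧ D (c i) = 0) → (∑ i, c i * y i) = 0 → ∀ i, c i = 0) ∧
    diffGen D kb (insert z (Set.range y)) = Kn

/-- `Kf` is a `d⁺`-solvable extension of `k`. -/
def IsDPlusSolvable {E : Type u} [Field E] (D : E → E) (k Kf : Subfield E) (d : ℕ) : Prop :=
  ∃ (Ω : DFld.{u}) (j : E →+* Ω.carrier),
    (∀ x, j (D x) = Ω.deriv (j x)) ∧
    ∃ (r : ℕ) (T : Fin (r + 1) → Subfield Ω.carrier),
      T 0 = Subfield.map j k ∧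
      Subfield.map j Kf ≤ T (Fin.last r) ∧
      (∀ i, ∀ x ∈ T i, Ω.deriv x ∈ T i) ∧
      ∀ i : Fin r,
        FinExt (T i.castSucc) (T i.succ) ∨ IsPVInhomLe Ω.deriv (T i.castSucc) (T i.succ) d

/-- `TSet D kb K` is the set of elements of `K` annihilated by some monic linear differential
operator with coefficients in `kb`. -/
def TSet {E : Type u} [Field E] (D : E → E) (kb K : Subfield E) : Set E :=
  {x | x ∈ K ∧ ∃ (n : ℕ) (a : Fin n → E), (∀ i, a i ∈ kb) ∧ LApply D n a x = 0}

section Helpers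

variable {E : Type u} [Field E]

/-- elements lying in a finitely generated differential `k`-submodule -/
def HLin (D : Derivation ℤ E E) (k : Subfield E) (y : E) : Prop :=
  ∃ S : Submodule k E, S.FG ∧ (∀ x ∈ S, D x ∈ S) ∧ y ∈ S

theorem HLin.add {D : Derivation ℤ E E} {k : Subfield E} {x y : E}
    (hx : HLin D k x) (hy : HLin D k y) : HLin D k (x + y) := by
  obtain ⟨S, hS, hD, hx⟩ := hx
  obtain ⟨S', hS', hD', hy⟩ := hy
  refine ⟨S ⊔ S', hS.sup hS', ?_, Submodule.add_mem_sup hx hy⟩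
  intro z hz
  obtain ⟨a, ha, b, hb, rfl⟩ := Submodule.mem_sup.1 hz
  rw [map_add]
  exact Submodule.add_mem_sup (hD a ha) (hD' b hb)

theorem HLin.mul {D : Derivation ℤ E E} {k : Subfield E} {x y : E}
    (hx : HLin D k x) (hy : HLin D k y) : HLin D k (x * y) := by
  obtain ⟨S, hS, hD, hx⟩ := hx
  obtain ⟨S', hS', hD', hy⟩ := hy
  refine ⟨S * S', hS.mul hS', ?_, Submodule.mul_mem_mul hx hy⟩
  intro z hz
  induction hz using Submodule.mul_induction_on' with
  | mem_mul_mem a ha b hb =>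
    rw [Derivation.leibniz, smul_eq_mul, smul_eq_mul, mul_comm b]
    exact add_mem (Submodule.mul_mem_mul ha (hD' b hb)) (Submodule.mul_mem_mul (hD a ha) hb)
  | add a _ b _ h1 h2 => rw [map_add]; exact add_mem h1 h2

theorem HLin.of_mem {D : Derivation ℤ E E} {k : Subfield E} (hk : ∀ x ∈ k, D x ∈ k) {x : E}
    (hx : x ∈ k) : HLin D k x := by
  have key : ∀ z : E, z ∈ Submodule.span k {(1 : E)} ↔ z ∈ k := by
    intro z
    rw [Submodule.mem_span_singleton]
    constructor
    · rintro ⟨a, rfl⟩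
      rw [Subfield.smul_def, smul_eq_mul, mul_one]; exact a.2
    · intro h
      exact ⟨⟨z, h⟩, by rw [Subfield.smul_def, smul_eq_mul, mul_one]⟩
  refine ⟨Submodule.span k {1}, Submodule.fg_span_singleton 1, ?_, (key x).2 hx⟩
  intro z hz
  exact (key _).2 (hk _ ((key _).1 hz))

theorem HLin.sum {D : Derivation ℤ E E} {k : Subfield E} (hk : ∀ x ∈ k, D x ∈ k) {ι : Type*}
    (s : Finset ι) (f : ι → E) (h : ∀ i ∈ s, HLin D k (f i)) : HLin D k (∑ i ∈ s, f i) := by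
  classical
  induction s using Finset.induction_on with
  | empty => simpa using HLin.of_mem hk k.zero_mem
  | insert a s ha ih =>
    rw [Finset.sum_insert ha]
    exact (h a (Finset.mem_insert_self _ _)).add
      (ih fun i hi => h i (Finset.mem_insert_of_mem hi))

theorem HLin.prod {D : Derivation ℤ E E} {k : Subfield E} (hk : ∀ x ∈ k, D x ∈ k) {ι : Type*}
    (s : Finset ι) (f : ι → E) (h : ∀ i ∈ s, HLin D k (f i)) : HLin D k (∏ i ∈ s, f i) := by
  classical
  induction s using Finset.induction_on with
  | empty => simpa using HLin.of_mem hk k.one_mem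
  | insert a s ha ih =>
    rw [Finset.prod_insert ha]
    exact (h a (Finset.mem_insert_self _ _)).mul
      (ih fun i hi => h i (Finset.mem_insert_of_mem hi))

theorem HLin.det {D : Derivation ℤ E E} {k : Subfield E} (hk : ∀ x ∈ k, D x ∈ k) {ι : Type*}
    [Fintype ι] [DecidableEq ι] (M : Matrix ι ι E) (h : ∀ i j, HLin D k (M i j)) :
    HLin D k M.det := by
  rw [Matrix.det_apply']
  refine HLin.sum hk _ _ fun σ _ => HLin.mul (HLin.of_mem hk ?_)
    (HLin.prod hk _ _ fun i _ => h _ _)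
  exact intCast_mem k _

theorem HLin.adjugate {D : Derivation ℤ E E} {k : Subfield E} (hk : ∀ x ∈ k, D x ∈ k) {ι : Type*}
    [Fintype ι] [DecidableEq ι] (M : Matrix ι ι E) (h : ∀ i j, HLin D k (M i j)) (i j : ι) :
    HLin D k (M.adjugate i j) := by
  rw [Matrix.adjugate_apply]
  refine HLin.det hk _ fun a b => ?_
  rw [Matrix.updateRow_apply]
  split_ifs
  · rw [Pi.single_apply]
    split_ifs
    · exact HLin.of_mem hk k.one_mem
    · exact HLin.of_mem hk k.zero_mem
  · exact h _ _

theorem HLin.of_system {D : Derivation ℤ E E} {k : Subfield E} (hk : ∀ x ∈ k, D x ∈ k)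
    {ι : Type*} [Finite ι] (x : ι → E)
    (h : ∀ i, D (x i) ∈ Submodule.span k (Set.range x)) (i : ι) : HLin D k (x i) := by
  refine ⟨Submodule.span k (Set.range x), Submodule.fg_span (Set.finite_range x), ?_,
    Submodule.subset_span ⟨i, rfl⟩⟩
  intro z hz
  induction hz using Submodule.span_induction with
  | mem z hz => obtain ⟨j, rfl⟩ := hz; exact h j
  | zero => simp
  | add a b _ _ h1 h2 => rw [map_add]; exact add_mem h1 h2
  | smul a z hz h1 =>
    rw [Subfield.smul_def, smul_eq_mul, Derivation.leibniz, smul_eq_mul, smul_eq_mul, mul_comm z]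
    exact add_mem (Submodule.smul_mem _ a h1) (Submodule.smul_mem _ (⟨_, hk a a.2⟩ : k) hz)

theorem HLin.exists_op {D : Derivation ℤ E E} {k : Subfield E} {y : E} (hy : HLin D k y) :
    ∃ (n : ℕ) (a : Fin n → E), (∀ i, a i ∈ k) ∧ LApply (⇑D) n a y = 0 := by
  obtain ⟨S, hS, hD, hy⟩ := hy
  have hmem : ∀ i, (⇑D)^[i] y ∈ S := by
    intro i
    induction i with
    | zero => exact hy
    | succ i ih => rw [Function.iterate_succ_apply']; exact hD _ ih
  have : Module.Finite k S := Module.Finite.iff_fg.2 hS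
  let f : ℕ →o Submodule k S :=
    ⟨fun n => Submodule.span k ((fun i : ℕ => (⟨(⇑D)^[i] y, hmem i⟩ : S)) '' Set.Iio n),
      fun a b hab => Submodule.span_mono (Set.image_mono (Set.Iio_subset_Iio hab))⟩
  obtain ⟨n, hn⟩ := monotone_stabilizes_iff_noetherian.2 (inferInstance : IsNoetherian k S) f
  have h1 : (⟨(⇑D)^[n] y, hmem n⟩ : S) ∈ f n := by
    rw [hn (n + 1) (Nat.le_succ n)]
    exact Submodule.subset_span ⟨n, by simp, rfl⟩
  have h2 : (⟨(⇑D)^[n] y, hmem n⟩ : S) ∈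
      Submodule.span k (Set.range fun i : Fin n => (⟨(⇑D)^[(i : ℕ)] y, hmem i⟩ : S)) := by
    refine Submodule.span_mono ?_ h1
    rintro _ ⟨i, hi, rfl⟩
    exact ⟨⟨i, hi⟩, rfl⟩
  obtain ⟨c, hc⟩ := (Submodule.mem_span_range_iff_exists_fun k).1 h2
  refine ⟨n, fun i => -(c i : E), fun i => neg_mem (c i).2, ?_⟩
  have h3 := congrArg (Subtype.val) hc
  simp only [Submodule.coe_sum, Submodule.coe_smul, Subfield.smul_def, smul_eq_mul] at h3
  rw [LApply, ← h3, ← Finset.sum_add_distrib]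
  exact Finset.sum_eq_zero fun i _ => by ring

theorem h_deriv_fprod (D : Derivation ℤ E E) {ι : Type*} [DecidableEq ι] (s : Finset ι)
    (f : ι → E) :
    D (∏ i ∈ s, f i) = ∑ i ∈ s, ∏ j ∈ s, if j = i then D (f j) else f j := by
  induction s using Finset.induction_on with
  | empty => simp
  | insert a s ha ih =>
    rw [Finset.prod_insert ha, Derivation.leibniz, ih, Finset.sum_insert ha,
      Finset.prod_insert ha, if_pos rfl, smul_eq_mul, smul_eq_mul, add_comm, Finset.mul_sum]
    congr 1
    · rw [mul_comm]
      congr 1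
      refine Finset.prod_congr rfl fun j hj => ?_
      rw [if_neg]; rintro rfl; exact ha hj
    · refine Finset.sum_congr rfl fun i hi => ?_
      rw [Finset.prod_insert ha, if_neg]
      rintro rfl; exact ha hi

theorem deriv_det (D : Derivation ℤ E E) {ι : Type*} [Fintype ι] [DecidableEq ι]
    (W : Matrix ι ι E) :
    D W.det = ∑ i, (W.updateCol i (fun j => D (W j i))).det := by
  simp only [Matrix.det_apply]
  rw [map_sum, Finset.sum_comm]
  refine Finset.sum_congr rfl fun σ _ => ?_
  rw [← Finset.smul_sum]
  have : D (Equiv.Perm.sign σ • ∏ i, W (σ i) i) = Equiv.Perm.sign σ • D (∏ i, W (σ i) i) := by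
    rw [Units.smul_def, Units.smul_def, map_zsmul]
  rw [this, h_deriv_fprod]
  congr 1
  refine Finset.sum_congr rfl fun i _ => Finset.prod_congr rfl fun j _ => ?_
  rw [Matrix.updateCol_apply]
  split_ifs with h
  · rw [h]
  · rfl

theorem deriv_det_of_system (D : Derivation ℤ E E) {ι : Type*} [Fintype ι] [DecidableEq ι]
    (W B : Matrix ι ι E) (h : W.map D = W * B) : D W.det = B.trace * W.det := by
  rw [deriv_det, Matrix.trace, Finset.sum_mul]
  refine Finset.sum_congr rfl fun i _ => ?_
  have : (fun j => D (W j i)) = fun j => ∑ l, B l i • W j l := by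
    ext j
    have := congrFun (congrFun h j) i
    rw [Matrix.map_apply, Matrix.mul_apply] at this
    rw [this]
    exact Finset.sum_congr rfl fun l _ => by rw [smul_eq_mul, mul_comm]
  rw [this, Matrix.det_updateCol_sum]
  rfl

theorem map_deriv_mul (D : Derivation ℤ E E) {l m n : Type*} [Fintype m]
    (A : Matrix l m E) (B : Matrix m n E) :
    (A * B).map D = A.map D * B + A * B.map D := by
  ext i j
  simp only [Matrix.map_apply, Matrix.mul_apply, Matrix.add_apply, map_sum,
    Derivation.leibniz, smul_eq_mul, ← Finset.sum_add_distrib]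
  exact Finset.sum_congr rfl fun _ _ => by ring

/-- a family solving a linear system over `k` with a full fundamental matrix in `E` -/
def HFull (D : Derivation ℤ E E) (k : Subfield E) {ι : Type} [Fintype ι] [DecidableEq ι]
    (x : ι → E) : Prop :=
  ∃ A : Matrix ι ι E, (∀ i j, A i j ∈ k) ∧ (∀ i, D (x i) = ∑ j, A i j * x j) ∧
    ∃ Y Y' : Matrix ι ι E, Y * Y' = 1 ∧ Y' * Y = 1 ∧ Y.map D = A * Y

theorem HFull.sumElim {D : Derivation ℤ E E} {k : Subfield E} {ι κ : Type} [Fintype ι]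
    [DecidableEq ι] [Fintype κ] [DecidableEq κ] {x : ι → E} {y : κ → E}
    (hx : HFull D k x) (hy : HFull D k y) : HFull D k (Sum.elim x y) := by
  obtain ⟨A, hA, hxA, Y, Y', h1, h2, h3⟩ := hx
  obtain ⟨B, hB, hyB, Z, Z', g1, g2, g3⟩ := hy
  refine ⟨Matrix.fromBlocks A 0 0 B, ?_, ?_, Matrix.fromBlocks Y 0 0 Z,
    Matrix.fromBlocks Y' 0 0 Z', ?_, ?_, ?_⟩
  · rintro (i | i) (j | j)
    · exact hA i j
    · exact k.zero_mem
    · exact k.zero_mem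
    · exact hB i j
  · rintro (i | i)
    · simpa using hxA i
    · simpa using hyB i
  · simp [Matrix.fromBlocks_multiply, h1, g1]
  · simp [Matrix.fromBlocks_multiply, h2, g2]
  · rw [Matrix.fromBlocks_multiply, Matrix.fromBlocks_map, h3, g3]
    congr 1 <;> · ext i j; simp

open scoped Kronecker in
theorem HFull.kron {D : Derivation ℤ E E} {k : Subfield E} {ι κ : Type} [Fintype ι]
    [DecidableEq ι] [Fintype κ] [DecidableEq κ] {x : ι → E} {y : κ → E}
    (hx : HFull D k x) (hy : HFull D k y) : HFull D k (fun p : ι × κ => x p.1 * y p.2) := by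
  obtain ⟨A, hA, hxA, Y, Y', h1, h2, h3⟩ := hx
  obtain ⟨B, hB, hyB, Z, Z', g1, g2, g3⟩ := hy
  have hone : ∀ {α : Type} [DecidableEq α] (i j : α), (1 : Matrix α α E) i j ∈ k := by
    intro α _ i j
    rw [Matrix.one_apply]
    split_ifs
    · exact k.one_mem
    · exact k.zero_mem
  refine ⟨A ⊗ₖ (1 : Matrix κ κ E) + (1 : Matrix ι ι E) ⊗ₖ B, ?_, ?_, Y ⊗ₖ Z, Y' ⊗ₖ Z', ?_, ?_, ?_⟩
  · rintro ⟨i, i'⟩ ⟨j, j'⟩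
    rw [Matrix.add_apply, Matrix.kronecker_apply, Matrix.kronecker_apply]
    exact add_mem (mul_mem (hA _ _) (hone _ _)) (mul_mem (hone _ _) (hB _ _))
  · rintro ⟨i, i'⟩
    simp only [Derivation.leibniz, hxA, hyB, smul_eq_mul, Matrix.add_apply,
      Matrix.kronecker_apply, add_mul, Finset.sum_add_distrib, Fintype.sum_prod_type,
      Matrix.one_apply]
    rw [add_comm]
    congr 1
    · simp only [mul_ite, mul_one, mul_zero, ite_mul, zero_mul, Finset.sum_ite_eq,
        Finset.mem_univ, if_true, Finset.mul_sum]
      exact Finset.sum_congr rfl fun j _ => by ring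
    · rw [Finset.sum_comm]
      simp only [one_mul, zero_mul, ite_mul, Finset.sum_ite_eq,
        Finset.mem_univ, if_true, Finset.mul_sum]
      exact Finset.sum_congr rfl fun j _ => by ring
  · rw [← Matrix.mul_kronecker_mul, h1, g1, Matrix.one_kronecker_one]
  · rw [← Matrix.mul_kronecker_mul, h2, g2, Matrix.one_kronecker_one]
  · rw [add_mul, ← Matrix.mul_kronecker_mul, ← Matrix.mul_kronecker_mul, one_mul, one_mul,
      ← h3, ← g3]
    ext ⟨i, i'⟩ ⟨j, j'⟩
    simp only [Matrix.map_apply, Matrix.kronecker_apply, Matrix.add_apply, Derivation.leibniz,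
      smul_eq_mul]
    ring

/-- `k`-linear combinations of full families -/
def HG (D : Derivation ℤ E E) (k : Subfield E) (P : E) : Prop :=
  ∃ (n : ℕ) (x : Fin n → E), HFull D k x ∧ ∃ c : Fin n → E, (∀ i, c i ∈ k) ∧ P = ∑ i, c i * x i

theorem HFull.equiv {D : Derivation ℤ E E} {k : Subfield E} {ι κ : Type} [Fintype ι]
    [DecidableEq ι] [Fintype κ] [DecidableEq κ] {x : ι → E} (hx : HFull D k x) (e : κ ≃ ι) :
    HFull D k (x ∘ e) := by
  obtain ⟨A, hA, hxA, Y, Y', h1, h2, h3⟩ := hx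
  refine ⟨A.submatrix e e, fun i j => hA _ _, ?_, Y.submatrix e e, Y'.submatrix e e, ?_, ?_, ?_⟩
  · intro i
    simp only [Function.comp_apply, hxA, Matrix.submatrix_apply]
    exact (Equiv.sum_comp e (fun j => A (e i) j * x j)).symm
  · rw [Matrix.submatrix_mul_equiv, h1, Matrix.submatrix_one_equiv]
  · rw [Matrix.submatrix_mul_equiv, h2, Matrix.submatrix_one_equiv]
  · rw [Matrix.submatrix_mul_equiv, ← h3]; rfl

theorem HG.mk' {D : Derivation ℤ E E} {k : Subfield E} {ι : Type} [Fintype ι]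
    [DecidableEq ι] {x : ι → E} (hx : HFull D k x) (c : ι → E) (hc : ∀ i, c i ∈ k) :
    HG D k (∑ i, c i * x i) :=
  ⟨_, _, hx.equiv (Fintype.equivFin ι).symm, c ∘ (Fintype.equivFin ι).symm, fun _ => hc _,
    (Equiv.sum_comp (Fintype.equivFin ι).symm (fun j => c j * x j)).symm⟩

theorem HG.pair {D : Derivation ℤ E E} {k : Subfield E} {P Q : E} (hP : HG D k P)
    (hQ : HG D k Q) : ∃ (n m : ℕ) (x : Fin n ⊕ Fin m → E), HFull D k x ∧
      ∃ c d : Fin n ⊕ Fin m → E, (∀ i, c i ∈ k) ∧ (∀ i, d i ∈ k) ∧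
        P = ∑ i, c i * x i ∧ Q = ∑ i, d i * x i := by
  obtain ⟨n, x, hx, c, hc, rfl⟩ := hP
  obtain ⟨m, y, hy, d, hd, rfl⟩ := hQ
  refine ⟨n, m, Sum.elim x y, hx.sumElim hy, Sum.elim c 0, Sum.elim 0 d, ?_, ?_, ?_, ?_⟩
  · rintro (i | i)
    · exact hc i
    · exact k.zero_mem
  · rintro (i | i)
    · exact k.zero_mem
    · exact hd i
  · simp
  · simp

theorem HG.add {D : Derivation ℤ E E} {k : Subfield E} {P Q : E} (hP : HG D k P)
    (hQ : HG D k Q) : HG D k (P + Q) := by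
  obtain ⟨n, m, x, hx, c, d, hc, hd, rfl, rfl⟩ := hP.pair hQ
  rw [← Finset.sum_add_distrib]
  simp_rw [← add_mul]
  exact HG.mk' hx (fun i => c i + d i) (fun i => add_mem (hc i) (hd i))

theorem HG.mul {D : Derivation ℤ E E} {k : Subfield E} {P Q : E} (hP : HG D k P)
    (hQ : HG D k Q) : HG D k (P * Q) := by
  obtain ⟨n, x, hx, c, hc, rfl⟩ := hP
  obtain ⟨m, y, hy, d, hd, rfl⟩ := hQ
  have := HG.mk' (hx.kron hy) (fun p => c p.1 * d p.2) (fun p => mul_mem (hc _) (hd _))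
  convert this using 1
  rw [Finset.sum_mul_sum, Fintype.sum_prod_type]
  exact Finset.sum_congr rfl fun i _ => Finset.sum_congr rfl fun j _ => by ring

theorem HG.of_mem {D : Derivation ℤ E E} {k : Subfield E} {a : E} (ha : a ∈ k) : HG D k a := by
  refine ⟨1, fun _ => 1, ⟨0, fun _ _ => k.zero_mem, by simp, 1, 1, by simp, by simp, ?_⟩,
    fun _ => a, fun _ => ha, by simp⟩
  ext i j
  rw [Subsingleton.elim i j]
  simp

theorem HG.deriv {D : Derivation ℤ E E} {k : Subfield E} (hk : ∀ x ∈ k, D x ∈ k) {P : E}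
    (hP : HG D k P) : HG D k (D P) := by
  obtain ⟨n, x, hx, c, hc, rfl⟩ := hP
  have hx' := hx
  obtain ⟨A, hA, hxA, -⟩ := hx'
  have h1 := HG.mk' hx (fun i => D (c i)) (fun i => hk _ (hc i))
  have h2 := HG.mk' hx (fun j => ∑ i, c i * A i j)
    (fun j => sum_mem fun i _ => mul_mem (hc i) (hA i j))
  convert h1.add h2 using 1
  rw [map_sum]
  simp only [Derivation.leibniz, smul_eq_mul, hxA, Finset.sum_add_distrib]
  rw [add_comm]
  congr 1
  · exact Finset.sum_congr rfl fun i _ => by ring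
  · simp_rw [Finset.mul_sum, Finset.sum_mul]
    rw [Finset.sum_comm]
    exact Finset.sum_congr rfl fun i _ => Finset.sum_congr rfl fun j _ => by ring

theorem exists_square_sub {ι κ : Type} [Fintype ι] [Fintype κ] [DecidableEq κ]
    (M : Matrix ι κ E) (N : Matrix κ ι E) (h : N * M = 1) :
    ∃ s : κ → ι, IsUnit (M.submatrix s id) := by
  obtain ⟨κ', a, -, hsp, hli⟩ := exists_linearIndependent' E (fun i => M i)
  have htop : Submodule.span E (Set.range fun i => M i) = ⊤ := by
    rw [eq_top_iff, ← (Pi.basisFun E κ).span_eq, Submodule.span_le]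
    rintro _ ⟨j, rfl⟩
    have : Pi.basisFun E κ j = ∑ i, N j i • M i := by
      ext l
      have := congrFun (congrFun h j) l
      rw [Matrix.mul_apply, Matrix.one_apply] at this
      simp only [Pi.basisFun_apply, Finset.sum_apply, Pi.smul_apply, smul_eq_mul, this,
        Pi.single_apply]
      simp only [eq_comm]
    rw [this]
    exact sum_mem fun i _ => Submodule.smul_mem _ _ (Submodule.subset_span ⟨i, rfl⟩)
  let bs : Module.Basis κ' E (κ → E) := Module.Basis.mk hli (by rw [hsp, htop])
  let e : κ ≃ κ' := (Pi.basisFun E κ).indexEquiv bs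
  refine ⟨a ∘ e, ?_⟩
  rw [← Matrix.linearIndependent_rows_iff_isUnit]
  exact hli.comp e e.injective

theorem HFull.main {D : Derivation ℤ E E} {k K : Subfield E} (hk : ∀ x ∈ k, D x ∈ k)
    (hK : ∀ x ∈ K, D x ∈ K) (hkK : k ≤ K) {ι : Type} [Fintype ι] [DecidableEq ι] {x : ι → E}
    (hx : HFull D k x) :
    ∃ (κ : Type) (_ : Fintype κ) (z : κ → E) (b : Matrix ι κ E) (w : E),
      (∀ i j, b i j ∈ K) ∧ (∀ i, x i = ∑ j, b i j * z j) ∧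
      (∀ c : κ → E, (∀ j, c j ∈ K) → ∑ j, c j * z j = 0 → ∀ j, c j = 0) ∧
      w ≠ 0 ∧ HLin D k w ∧ D w / w ∈ K ∧ ∀ i j, HLin D k (b i j * w) := by
  classical
  obtain ⟨A, hA, hxA, Y, Y', h1, h2, h3⟩ := hx
  obtain ⟨κ, a, ha, hsp, hli⟩ := exists_linearIndependent' K x
  have : Finite κ := Finite.of_injective a ha
  have := Fintype.ofFinite κ
  have hind : ∀ c : κ → E, (∀ j, c j ∈ K) → ∑ j, c j * x (a j) = 0 → ∀ j, c j = 0 := by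
    intro c hc h j
    have := Fintype.linearIndependent_iff.1 hli (fun j => (⟨c j, hc j⟩ : K)) h j
    exact congrArg Subtype.val this
  have hb : ∀ i, ∃ c : κ → K, ∑ j, c j • x (a j) = x i := fun i =>
    (Submodule.mem_span_range_iff_exists_fun K).1
      (hsp ▸ Submodule.subset_span ⟨i, rfl⟩ : x i ∈ Submodule.span K (Set.range (x ∘ a)))
  choose b0 hb0 using hb
  let b : Matrix ι κ E := Matrix.of fun i j => (b0 i j : E)
  have hbK : ∀ i j, b i j ∈ K := fun i j => (b0 i j).2
  have hbx : ∀ i, x i = ∑ j, b i j * x (a j) := fun i => (hb0 i).symm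
  -- matrices
  let p : Matrix κ ι E := (1 : Matrix ι ι E).submatrix a id
  have hp : ∀ {l : Type} (M : Matrix ι l E), p * M = M.submatrix a id := by
    intro l M
    ext i j
    simp [p, Matrix.mul_apply, Matrix.one_apply]
  have hpb : p * b = 1 := by
    rw [hp]
    ext i j
    have := hind (fun j => b (a i) j - (1 : Matrix κ κ E) i j) (fun j => sub_mem (hbK _ _) (by
      rw [Matrix.one_apply]; split_ifs
      · exact K.one_mem
      · exact K.zero_mem)) (by
      simp only [sub_mul, Finset.sum_sub_distrib, ← hbx, Matrix.one_apply, ite_mul, one_mul,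
        zero_mul, Finset.sum_ite_eq, Finset.mem_univ, if_true, sub_self]) j
    exact sub_eq_zero.1 this
  let B : Matrix κ κ E := (A * b).submatrix a id
  have hAb : ∀ i j, (A * b) i j ∈ K := fun i j => by
    rw [Matrix.mul_apply]
    exact sum_mem fun l _ => mul_mem (hkK (hA _ _)) (hbK _ _)
  have hBK : ∀ i j, B i j ∈ K := fun i j => hAb _ _
  have hAx : ∀ i, D (x i) = ∑ j, (A * b) i j * x (a j) := by
    intro i
    rw [hxA]
    simp only [Matrix.mul_apply, Finset.sum_mul]
    rw [Finset.sum_comm]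
    refine Finset.sum_congr rfl fun j _ => ?_
    rw [hbx j, Finset.mul_sum]
    exact Finset.sum_congr rfl fun l _ => by rw [mul_assoc]
  have hsys : b.map D + b * B = A * b := by
    ext i j
    refine sub_eq_zero.1 (hind (fun j => (b.map D + b * B) i j - (A * b) i j) (fun j => ?_) ?_ j)
    · refine sub_mem (add_mem (hK _ (hbK _ _)) ?_) (hAb _ _)
      rw [Matrix.mul_apply]
      exact sum_mem fun l _ => mul_mem (hbK _ _) (hBK _ _)
    · simp only [sub_mul, Finset.sum_sub_distrib, ← hAx]
      rw [sub_eq_zero, hbx i, map_sum]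
      simp only [Derivation.leibniz, smul_eq_mul, Matrix.add_apply, add_mul,
        Finset.sum_add_distrib, Matrix.map_apply]
      rw [add_comm]
      congr 1
      · simp only [Matrix.mul_apply, Finset.sum_mul]
        rw [Finset.sum_comm]
        refine Finset.sum_congr rfl fun j _ => ?_
        rw [hAx, Finset.mul_sum]
        refine Finset.sum_congr rfl fun l _ => ?_
        rw [mul_assoc]; rfl
      · exact Finset.sum_congr rfl fun j _ => mul_comm _ _
  let M : Matrix ι κ E := Y' * b
  have hY' : Y'.map D = -(Y' * A) := by
    have e1 : (Y' * Y).map D = 0 := by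
      rw [h2]; ext i j
      rw [Matrix.map_apply, Matrix.one_apply]; split_ifs <;> simp
    rw [map_deriv_mul, h3] at e1
    have e2 := congrArg (· * Y') e1
    simp only [add_mul, zero_mul, Matrix.mul_assoc, h1, Matrix.mul_one] at e2
    exact eq_neg_of_add_eq_zero_left e2
  have hM : M.map D = M * (-B) := by
    have : b.map D = A * b - b * B := eq_sub_of_add_eq hsys
    simp only [M]
    rw [map_deriv_mul, hY', this, Matrix.mul_sub, Matrix.neg_mul, Matrix.mul_neg,
      ← Matrix.mul_assoc, ← Matrix.mul_assoc]
    abel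
  have hpM : (p * Y) * M = 1 := by
    simp only [M]
    rw [Matrix.mul_assoc, ← Matrix.mul_assoc Y, h1, Matrix.one_mul, hpb]
  obtain ⟨s, hs⟩ := exists_square_sub M (p * Y) hpM
  set G := M.submatrix s id with hG
  have hGD : G.map D = G * (-B) := by
    ext i j
    have := congrFun (congrFun hM (s i)) j
    exact this
  have hGdet : IsUnit G.det := (Matrix.isUnit_iff_isUnit_det G).1 hs
  let Z := G⁻¹
  have hZG : Z * G = 1 := Matrix.nonsing_inv_mul G hGdet
  have hGZ : G * Z = 1 := Matrix.mul_nonsing_inv G hGdet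
  have hZD : Z.map D = B * Z := by
    have e1 : (G * Z).map D = 0 := by
      rw [hGZ]; ext i j
      rw [Matrix.map_apply, Matrix.one_apply]; split_ifs <;> simp
    rw [map_deriv_mul, hGD] at e1
    have e2 := congrArg (Z * ·) e1
    simp only [mul_add, mul_zero, ← Matrix.mul_assoc, hZG, Matrix.one_mul] at e2
    rw [Matrix.neg_mul] at e2
    exact (neg_add_eq_zero.1 e2).symm
  let X : Matrix ι κ E := b * Z
  have hXD : X.map D = A * X := by
    simp only [X]
    rw [map_deriv_mul, hZD, ← Matrix.mul_assoc, ← Matrix.add_mul, hsys, Matrix.mul_assoc]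
  have hXl : ∀ i j, HLin D k (X i j) := by
    intro i j
    refine HLin.of_system hk (fun i => X i j) (fun i => ?_) i
    have := congrFun (congrFun hXD i) j
    rw [Matrix.map_apply, Matrix.mul_apply] at this
    rw [this]
    exact sum_mem fun l _ =>
      Submodule.smul_mem _ (⟨A i l, hA i l⟩ : k) (Submodule.subset_span ⟨l, rfl⟩)
  have hZX : Z = X.submatrix a id := by
    rw [← hp]; simp only [X]
    rw [← Matrix.mul_assoc, hpb, Matrix.one_mul]
  have hZl : ∀ i j, HLin D k (Z i j) := by
    intro i j; rw [hZX]; exact hXl _ _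
  have hdd : Z.det * G.det = 1 := by rw [← Matrix.det_mul, hZG, Matrix.det_one]
  have hw0 : Z.det ≠ 0 := left_ne_zero_of_mul_eq_one hdd
  refine ⟨κ, inferInstance, x ∘ a, b, Z.det, hbK, hbx, hind, hw0, HLin.det hk Z hZl, ?_, ?_⟩
  · have hT : Z.transpose.map D = Z.transpose * B.transpose := by
      rw [← Matrix.transpose_mul, ← hZD]; rfl
    have := deriv_det_of_system D _ _ hT
    rw [Matrix.det_transpose] at this
    rw [this, mul_div_assoc, div_self hw0, mul_one, Matrix.trace_transpose]
    exact sum_mem fun i _ => hBK i i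
  · intro i j
    have : b i j * Z.det = (X * Z.adjugate) i j := by
      simp only [X]
      rw [Matrix.mul_assoc, Matrix.mul_adjugate, Matrix.mul_smul, Matrix.mul_one,
        Matrix.smul_apply, smul_eq_mul, mul_comm]
    rw [this, Matrix.mul_apply]
    exact HLin.sum hk _ _ fun l _ => (hXl _ _).mul (HLin.adjugate hk _ hZl _ _)

theorem exists_const_kernel {D : Derivation ℤ E E} {n : ℕ} (A W : Matrix (Fin n) (Fin n) E)
    (hW : W.map D = A * W) (hdet : ¬ IsUnit W) :
    ∃ v : Fin n → E, v ≠ 0 ∧ (∀ i, D (v i) = 0) ∧ ∀ i, ∑ j, W i j * v j = 0 := by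
  classical
  have hstab : ∀ v : Fin n → E, (∀ i, ∑ j, W i j * v j = 0) →
      ∀ i, ∑ j, W i j * D (v j) = 0 := by
    intro v hv i
    have h1 : D (∑ j, W i j * v j) = 0 := by rw [hv i, map_zero]
    rw [map_sum] at h1
    simp only [Derivation.leibniz, smul_eq_mul, Finset.sum_add_distrib] at h1
    have h2 : ∑ j, v j * D (W i j) = 0 := by
      have : ∀ j, D (W i j) = ∑ l, A i l * W l j := by
        intro j
        have := congrFun (congrFun hW i) j
        rwa [Matrix.map_apply, Matrix.mul_apply] at this
      simp only [this, Finset.mul_sum]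
      rw [Finset.sum_comm]
      refine Finset.sum_eq_zero fun l _ => ?_
      have e := hv l
      have : ∑ j, v j * (A i l * W l j) = A i l * ∑ j, W l j * v j := by
        rw [Finset.mul_sum]; exact Finset.sum_congr rfl fun j _ => by ring
      rw [this, e, mul_zero]
    rwa [h2, add_zero] at h1
  have hex : ∃ m : ℕ, ∃ v : Fin n → E, v ≠ 0 ∧ (∀ i, ∑ j, W i j * v j = 0) ∧
      (Finset.univ.filter fun i => v i ≠ 0).card = m := by
    have : W.det = 0 := by
      by_contra h
      exact hdet ((Matrix.isUnit_iff_isUnit_det W).2 (isUnit_iff_ne_zero.2 h))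
    obtain ⟨v, hv, hWv⟩ := Matrix.exists_mulVec_eq_zero_iff.2 this
    exact ⟨_, v, hv, fun i => congrFun hWv i, rfl⟩
  obtain ⟨v, hv0, hv, hcard⟩ := Nat.find_spec hex
  obtain ⟨i0, hi0⟩ := Function.ne_iff.1 hv0
  have hi0' : v i0 ≠ 0 := hi0
  refine ⟨fun i => v i / v i0, ?_, ?_, ?_⟩
  · intro h
    have := congrFun h i0
    simp only [Pi.zero_apply, div_self hi0'] at this
    exact one_ne_zero this
  · by_contra hcon
    have hker : ∀ i, ∑ j, W i j * (v j / v i0) = 0 := by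
      intro i
      have : ∑ j, W i j * (v j / v i0) = (∑ j, W i j * v j) / v i0 := by
        rw [Finset.sum_div]; exact Finset.sum_congr rfl fun j _ => by ring
      rw [this, hv i, zero_div]
    refine Nat.find_min hex (m := (Finset.univ.filter fun i => D (v i / v i0) ≠ 0).card) ?_
      ⟨fun i => D (v i / v i0), ?_, hstab _ hker, rfl⟩
    · rw [← hcard]
      refine Finset.card_lt_card (Finset.ssubset_iff_of_subset ?_ |>.2 ⟨i0, ?_, ?_⟩)
      · intro i hi
        simp only [Finset.mem_filter, Finset.mem_univ, true_and] at hi ⊢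
        intro h
        rw [h, zero_div, map_zero] at hi
        exact hi rfl
      · simpa using hi0'
      · simp [div_self hi0']
    · intro h
      exact hcon fun i => congrFun h i
  · intro i
    have : ∑ j, W i j * (v j / v i0) = (∑ j, W i j * v j) / v i0 := by
      rw [Finset.sum_div]; exact Finset.sum_congr rfl fun j _ => by ring
    rw [this, hv i, zero_div]

theorem wronskian_full {D : Derivation ℤ E E} {k : Subfield E} {n : ℕ} {a : Fin n → E}
    (hc : ∀ x, D x = 0 → x ∈ k) (ha : ∀ i, a i ∈ k) (y : Fin n → E)
    (hy : ∀ i, LApply (⇑D) n a (y i) = 0)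
    (hind : ∀ c : Fin n → E, (∀ i, c i ∈ k ∧ D (c i) = 0) → (∑ i, c i * y i) = 0 → ∀ i, c i = 0)
    (j : Fin n) : HFull D k (fun i : Fin n => (⇑D)^[(i : ℕ)] (y j)) := by
  classical
  let A : Matrix (Fin n) (Fin n) E := Matrix.of fun i l =>
    if (i : ℕ) + 1 = n then - a l else if (l : ℕ) = i + 1 then 1 else 0
  have hA : ∀ i l, A i l ∈ k := by
    intro i l
    simp only [A, Matrix.of_apply]
    split_ifs
    · exact neg_mem (ha l)
    · exact k.one_mem
    · exact k.zero_mem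
  have hsol : ∀ (j : Fin n) (i : Fin n),
      D ((⇑D)^[(i : ℕ)] (y j)) = ∑ l, A i l * (⇑D)^[(l : ℕ)] (y j) := by
    intro j i
    rw [← Function.iterate_succ_apply' (⇑D)]
    simp only [A, Matrix.of_apply]
    by_cases h : (i : ℕ) + 1 = n
    · simp only [h, if_true]
      have h1 := hy j
      rw [LApply] at h1
      rw [show (i : ℕ).succ = n from h, eq_neg_of_add_eq_zero_left h1, ← Finset.sum_neg_distrib]
      exact Finset.sum_congr rfl fun l _ => by ring
    · simp only [h, if_false]
      have hlt : (i : ℕ) + 1 < n := by omega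
      rw [Finset.sum_eq_single (⟨(i : ℕ) + 1, hlt⟩ : Fin n)]
      · simp
      · intro l _ hl
        rw [if_neg, zero_mul]
        intro h'
        exact hl (Fin.ext h')
      · simp
  let W : Matrix (Fin n) (Fin n) E := Matrix.of fun i j => (⇑D)^[(i : ℕ)] (y j)
  have hW : W.map D = A * W := by
    ext i j
    rw [Matrix.map_apply, Matrix.mul_apply]
    exact hsol j i
  have hu : IsUnit W := by
    by_contra hu
    obtain ⟨v, hv0, hvD, hv⟩ := exists_const_kernel A W hW hu
    apply hv0
    have hn : 0 < n := j.pos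
    have := hv ⟨0, hn⟩
    ext i
    refine hind v (fun i => ⟨hc _ (hvD i), hvD i⟩) ?_ i
    rw [← this]
    exact Finset.sum_congr rfl fun l _ => mul_comm _ _
  have hd := (Matrix.isUnit_iff_isUnit_det W).1 hu
  exact ⟨A, hA, hsol j, W, W⁻¹, Matrix.mul_nonsing_inv W hd, Matrix.nonsing_inv_mul W hd, hW⟩

theorem deriv_div' (D : Derivation ℤ E E) (p q : E) (hq : q ≠ 0) :
    D (p / q) = (D p * q - p * D q) / (q * q) := by
  have h : D p = D (p / q * q) := by rw [div_mul_cancel₀ _ hq]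
  rw [Derivation.leibniz, smul_eq_mul, smul_eq_mul] at h
  rw [eq_div_iff (mul_ne_zero hq hq)]
  have h2 : p / q * q = p := div_mul_cancel₀ _ hq
  generalize p / q = r at *
  rw [← h2, h2, h, ← h2]; ring

theorem diffGen_le {D : E → E} {k : Subfield E} {S : Set E} {F : Subfield E} (h1 : k ≤ F)
    (h2 : S ⊆ F) (h3 : ∀ x ∈ F, D x ∈ F) : diffGen D k S ≤ F :=
  sInf_le ⟨h1, h2, h3⟩

theorem le_diffGen {D : E → E} {k : Subfield E} {S : Set E} : k ≤ diffGen D k S :=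
  le_sInf fun _ h => h.1

theorem subset_diffGen {D : E → E} {k : Subfield E} {S : Set E} :
    S ⊆ diffGen D k S := fun _ hx =>
  Subfield.mem_sInf.2 fun _ h => h.2.1 hx

theorem deriv_diffGen {D : E → E} {k : Subfield E} {S : Set E} {x : E}
    (hx : x ∈ diffGen D k S) : D x ∈ diffGen D k S :=
  Subfield.mem_sInf.2 fun F h => h.2.2 x (Subfield.mem_sInf.1 hx F h)

theorem exists_frac {D : Derivation ℤ E E} {k : Subfield E} (hk : ∀ x ∈ k, D x ∈ k) {S : Set E}
    (hS : ∀ y ∈ S, HG D k y) (htop : diffGen (⇑D) k S = ⊤) (f : E) :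
    ∃ P Q, HG D k P ∧ HG D k Q ∧ Q ≠ 0 ∧ f = P / Q := by
  have hneg : ∀ {P}, HG D k P → HG D k (-P) := fun {P} h => by
    have := (HG.of_mem (D := D) (neg_mem k.one_mem)).mul h
    rwa [neg_one_mul] at this
  let F : Subfield E :=
    { carrier := {f | ∃ P Q, HG D k P ∧ HG D k Q ∧ Q ≠ 0 ∧ f = P / Q}
      zero_mem' := ⟨0, 1, HG.of_mem k.zero_mem, HG.of_mem k.one_mem, one_ne_zero, by simp⟩
      one_mem' := ⟨1, 1, HG.of_mem k.one_mem, HG.of_mem k.one_mem, one_ne_zero, by simp⟩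
      add_mem' := by
        rintro _ _ ⟨P, Q, hP, hQ, h0, rfl⟩ ⟨P', Q', hP', hQ', h0', rfl⟩
        exact ⟨_, _, (hP.mul hQ').add (hQ.mul hP'), hQ.mul hQ', mul_ne_zero h0 h0',
          div_add_div _ _ h0 h0'⟩
      neg_mem' := by
        rintro _ ⟨P, Q, hP, hQ, h0, rfl⟩
        exact ⟨_, _, hneg hP, hQ, h0, (neg_div _ _).symm⟩
      mul_mem' := by
        rintro _ _ ⟨P, Q, hP, hQ, h0, rfl⟩ ⟨P', Q', hP', hQ', h0', rfl⟩
        exact ⟨_, _, hP.mul hP', hQ.mul hQ', mul_ne_zero h0 h0', div_mul_div_comm _ _ _ _⟩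
      inv_mem' := by
        rintro _ ⟨P, Q, hP, hQ, h0, rfl⟩
        by_cases hP0 : P = 0
        · exact ⟨0, 1, HG.of_mem k.zero_mem, HG.of_mem k.one_mem, one_ne_zero, by simp [hP0]⟩
        · exact ⟨_, _, hQ, hP, hP0, inv_div _ _⟩ }
  have hle : diffGen (⇑D) k S ≤ F := by
    refine diffGen_le ?_ ?_ ?_
    · intro x hx
      exact ⟨x, 1, HG.of_mem hx, HG.of_mem k.one_mem, one_ne_zero, by simp⟩
    · intro x hx
      exact ⟨x, 1, hS x hx, HG.of_mem k.one_mem, one_ne_zero, by simp⟩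
    · rintro _ ⟨P, Q, hP, hQ, h0, rfl⟩
      refine ⟨D P * Q + -(P * D Q), Q * Q, ((hP.deriv hk).mul hQ).add (hneg (hP.mul (hQ.deriv hk))),
        hQ.mul hQ, mul_ne_zero h0 h0, ?_⟩
      rw [deriv_div' D P Q h0, sub_eq_add_neg]
  rw [htop] at hle
  exact hle (Subfield.mem_top f)

theorem deriv_alg [CharZero E] {D : Derivation ℤ E E} {M : Subfield E} (hM : ∀ x ∈ M, D x ∈ M)
    (F : IntermediateField M E) {x : E} (hx : x ∈ F) (hal : IsAlgebraic M x) : D x ∈ F := by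
  have hMF : ∀ a : E, a ∈ M → a ∈ F := fun a ha => F.algebraMap_mem ⟨a, ha⟩
  have key : ∀ p : Polynomial M, ∃ r ∈ F, D (Polynomial.aeval x p) =
      r + Polynomial.aeval x (Polynomial.derivative p) * D x := by
    intro p
    induction p using Polynomial.induction_on' with
    | add p q hp hq =>
      obtain ⟨r, hr, h1⟩ := hp
      obtain ⟨r', hr', h2⟩ := hq
      refine ⟨r + r', add_mem hr hr', ?_⟩
      simp only [map_add, h1, h2]; ring
    | monomial n a =>
      refine ⟨D a * x ^ n, mul_mem (hMF _ (hM _ a.2)) (pow_mem hx n), ?_⟩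
      simp only [Polynomial.aeval_monomial, Polynomial.derivative_monomial, Derivation.leibniz,
        Derivation.leibniz_pow, smul_eq_mul, nsmul_eq_mul, map_mul, map_natCast]
      change (a : E) * _ + x ^ n * D (a : E) = _ + (a : E) * _ * _ * _
      ring
  have hint : IsIntegral M x := hal.isIntegral
  obtain ⟨r, hr, h⟩ := key (minpoly M x)
  rw [minpoly.aeval, map_zero] at h
  have hne : Polynomial.aeval x (Polynomial.derivative (minpoly M x)) ≠ 0 :=
    (minpoly.irreducible hint).separable.aeval_derivative_ne_zero (minpoly.aeval M x)
  have hmem : Polynomial.aeval x (Polynomial.derivative (minpoly M x)) ∈ F :=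
    Polynomial.aeval_algHom_apply F.val (⟨x, hx⟩ : F) _ ▸ SetLike.coe_mem _
  have : D x = -r / Polynomial.aeval x (Polynomial.derivative (minpoly M x)) := by
    rw [eq_div_iff hne, mul_comm]
    exact (neg_eq_of_add_eq_zero_right h.symm).symm
  rw [this]
  exact div_mem (neg_mem hr) hmem

theorem HLin.inv_of_alg [CharZero E] {D : Derivation ℤ E E} {k : Subfield E}
    (hk : ∀ x ∈ k, D x ∈ k) {w : E} (hw : w ≠ 0) (hu : IsAlgebraic k (D w / w)) :
    HLin D k w⁻¹ := by
  let F := IntermediateField.adjoin k {D w / w}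
  have hfin : FiniteDimensional k F :=
    IntermediateField.adjoin.finiteDimensional hu.isIntegral
  have huF : D w / w ∈ F := IntermediateField.mem_adjoin_simple_self k _
  have hFD : ∀ x ∈ F, D x ∈ F := by
    intro x hx
    have : IsAlgebraic k (⟨x, hx⟩ : F) := Algebra.IsAlgebraic.isAlgebraic _
    exact deriv_alg hk F hx (this.algebraMap (A := E))
  have hfg : F.toSubalgebra.toSubmodule.FG := Module.Finite.iff_fg.1 hfin
  refine ⟨F.toSubalgebra.toSubmodule.map (LinearMap.mulRight k w⁻¹), hfg.map _, ?_, ?_⟩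
  · rintro _ ⟨a, ha, rfl⟩
    have ha' : a ∈ F := ha
    refine ⟨D a - D w / w * a, (sub_mem (hFD a ha') (mul_mem huF ha') : _ ∈ F), ?_⟩
    simp only [LinearMap.mulRight_apply, ← div_eq_mul_inv]
    rw [deriv_div' D a w hw]
    field_simp
  · exact ⟨1, one_mem F, by simp⟩

theorem alg_of_sub {k : Subfield E} (A : Subalgebra k E) (M : Subfield E)
    (h : ∀ a ∈ A, a ∈ M) {x : E} (hx : IsAlgebraic A x) : IsAlgebraic M x := by
  obtain ⟨p, hp, hpx⟩ := hx
  let φ : A →+* M := (A.val : A →+* E).codRestrict M (fun a => h a a.2)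
  have hφ : Function.Injective φ := by
    intro a b hab
    apply Subtype.ext
    exact congrArg (Subtype.val : M → E) hab
  refine ⟨p.map φ, (Polynomial.map_ne_zero_iff hφ).2 hp, ?_⟩
  rw [Polynomial.aeval_def, Polynomial.eval₂_map]
  exact hpx

theorem trdegOf_add_one_le {k M K : Subfield E} (hkM : k ≤ M) (hMK : M ≤ K) {x : E} (hx : x ∈ K)
    (htr : Transcendental M x) : trdegOf k M + 1 ≤ trdegOf k K := by
  have : Nonempty {s : Set E // s ⊆ (M : Set E) ∧
      AlgebraicIndependent ↥k (fun x : ↥s => (x : E))} :=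
    ⟨⟨∅, Set.empty_subset _, by
      rw [algebraicIndependent_empty_type_iff]
      exact (algebraMap k E).injective⟩⟩
  unfold trdegOf
  rw [Cardinal.ciSup_add _ (Cardinal.bddAbove_of_small)]
  refine ciSup_le' fun s => ?_
  obtain ⟨s, hsM, hs⟩ := s
  have hxM : x ∉ s := fun h => by
    have hh : x ∈ M := hsM h
    exact htr (isAlgebraic_algebraMap (⟨x, hh⟩ : M))
  have hadj : ∀ a ∈ Algebra.adjoin k s, a ∈ M := by
    intro a ha
    induction ha using Algebra.adjoin_induction with
    | mem a ha => exact hsM ha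
    | algebraMap r => exact hkM r.2
    | add _ _ _ _ h1 h2 => exact add_mem h1 h2
    | mul _ _ _ _ h1 h2 => exact mul_mem h1 h2
  have hins : AlgebraicIndepOn k (id : E → E) (insert x s) := by
    refine AlgebraicIndepOn.insert hs ?_
    rw [Set.image_id]
    intro hal
    exact htr (alg_of_sub _ M hadj hal)
  have := le_ciSup (f := fun s : {s : Set E // s ⊆ (K : Set E) ∧
      AlgebraicIndependent ↥k (fun x : ↥s => (x : E))} => Cardinal.mk ↥(s.1))
      (Cardinal.bddAbove_of_small)
      ⟨insert x s, Set.insert_subset hx (hsM.trans hMK), hins⟩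
  rwa [Cardinal.mk_insert hxM] at this

theorem trdegOf_lt {k K : Subfield E} (S : Set E) (hS : S.Finite)
    (htop : IntermediateField.adjoin k S = ⊤) : trdegOf k K < Cardinal.aleph0 := by
  have halg : Algebra.IsAlgebraic (Algebra.adjoin k S) E := by
    constructor
    intro x
    have hx : x ∈ IntermediateField.adjoin k S := by rw [htop]; trivial
    obtain ⟨r, hr, s, hs, rfl⟩ := IntermediateField.mem_adjoin_iff_div.1 hx
    have h1 : IsAlgebraic (Algebra.adjoin k S) r :=
      isAlgebraic_algebraMap (⟨r, hr⟩ : Algebra.adjoin k S)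
    have h2 : IsAlgebraic (Algebra.adjoin k S) s :=
      isAlgebraic_algebraMap (⟨s, hs⟩ : Algebra.adjoin k S)
    rw [div_eq_mul_inv]
    exact h1.mul h2.inv
  have h1 : Algebra.trdeg k E ≤ Cardinal.mk S := Algebra.IsAlgebraic.trdeg_le_cardinalMk k S
  refine lt_of_le_of_lt ?_ (h1.trans_lt (Cardinal.lt_aleph0_iff_set_finite.2 hS))
  refine ciSup_le' fun s => ?_
  exact s.2.2.cardinalMk_le_trdeg

end Helpers
theorem h_exists_trans {E : Type u} [Field E] (k K : Subfield E) (h : 1 ≤ trdegOf k K) :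
    ∃ f ∈ K, Transcendental k f := by
  by_contra hcon
  simp only [not_exists, not_and, Transcendental, not_not] at hcon
  have : trdegOf k K ≤ 0 := by
    refine ciSup_le' fun s => ?_
    obtain ⟨s, hsK, hs⟩ := s
    have : s = ∅ := by
      rw [Set.eq_empty_iff_forall_notMem]
      intro x hx
      exact hs.transcendental ⟨x, hx⟩ (hcon x (hsK hx))
    simp [this]
  have := h.trans this
  exact absurd this (by simp)

theorem h_key {E : Type u} [Field E] [CharZero E] {D : Derivation ℤ E E} {k K : Subfield E}
    (hk : ∀ x ∈ k, D x ∈ k) (hK : ∀ x ∈ K, D x ∈ K) (hkK : k ≤ K)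
    (hc : ∀ x, D x = 0 → x ∈ k) {f P Q : E} (hP : HG D k P) (hQ : HG D k Q) (hQ0 : Q ≠ 0)
    (hf : f = P / Q) (hfK : f ∈ K) (hft : Transcendental k f) :
    ∃ y : E, y ≠ 0 ∧ HLin D k y ∧ D y / y ∈ K ∧ Transcendental k (D y / y) := by
  obtain ⟨n, m, x, hx, c, d, hcc, hdd, hPx, hQx⟩ := hP.pair hQ
  obtain ⟨κ, _, z, b, w, hbK, hbx, hind, hw0, hwl, hwK, hbw⟩ := hx.main hk hK hkK
  by_cases hwa : Transcendental k (D w / w)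
  · exact ⟨w, hw0, hwl, hwK, hwa⟩
  have hwa' : IsAlgebraic k (D w / w) := not_not.1 hwa
  have hwi := HLin.inv_of_alg hk hw0 hwa'
  -- some entry of b is transcendental
  have hg : ∃ i j, Transcendental k (b i j) := by
    by_contra hcon
    simp only [not_exists, Transcendental, not_not] at hcon
    have hkalg : ∀ a ∈ k, IsAlgebraic k a := fun a ha => isAlgebraic_algebraMap (⟨a, ha⟩ : k)
    have comb : ∀ c : Fin n ⊕ Fin m → E, (∑ i, c i * x i) = ∑ j, (∑ i, c i * b i j) * z j := by
      intro c
      simp only [Finset.sum_mul]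
      rw [Finset.sum_comm]
      refine Finset.sum_congr rfl fun i _ => ?_
      rw [hbx i, Finset.mul_sum]
      exact Finset.sum_congr rfl fun j _ => by ring
    have hcK : ∀ c : Fin n ⊕ Fin m → E, (∀ i, c i ∈ k) → ∀ j, ∑ i, c i * b i j ∈ K :=
      fun c hc j => sum_mem fun i _ => mul_mem (hkK (hc i)) (hbK i j)
    have hcA : ∀ c : Fin n ⊕ Fin m → E, (∀ i, c i ∈ k) → ∀ j, IsAlgebraic k (∑ i, c i * b i j) :=
      fun c hc j => Finset.sum_induction _ (IsAlgebraic k) (fun _ _ h h2 => h.add h2) isAlgebraic_zero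
        fun i _ => (hkalg _ (hc i)).mul (hcon i j)
    have hrel : ∀ j, (∑ i, c i * b i j) - f * (∑ i, d i * b i j) = 0 := by
      refine hind _ (fun j => sub_mem (hcK c hcc j) (mul_mem hfK (hcK d hdd j))) ?_
      simp only [sub_mul, Finset.sum_sub_distrib, mul_assoc, ← Finset.mul_sum]
      rw [← comb, ← comb, ← hPx, ← hQx, hf, div_mul_cancel₀ _ hQ0, sub_self]
    have hne : ∃ j, (∑ i, d i * b i j) ≠ 0 := by
      by_contra h0
      simp only [not_exists, not_not] at h0
      apply hQ0
      rw [hQx, comb]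
      exact Finset.sum_eq_zero fun j _ => by rw [h0 j, zero_mul]
    obtain ⟨j, hj⟩ := hne
    have : f = (∑ i, c i * b i j) * (∑ i, d i * b i j)⁻¹ := by
      rw [← div_eq_mul_inv, eq_div_iff hj]
      exact (sub_eq_zero.1 (hrel j)).symm
    apply hft
    rw [this]
    exact (hcA c hcc j).mul (hcA d hdd j).inv
  obtain ⟨i, j, hgt⟩ := hg
  set g := b i j with hgdef
  have hgK : g ∈ K := hbK i j
  have hgl : HLin D k g := by
    have := (hbw i j).mul hwi
    rwa [mul_assoc, mul_inv_cancel₀ hw0, mul_one] at this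
  have hnot : ∀ a ∈ k, g ≠ a := by
    rintro a ha rfl
    exact hgt (isAlgebraic_algebraMap (⟨g, ha⟩ : k))
  have hg0 : g ≠ 0 := hnot 0 k.zero_mem
  have hg1 : g + 1 ≠ 0 := fun h => hnot (-1) (neg_mem k.one_mem) (eq_neg_of_add_eq_zero_left h)
  have hDg : D g ≠ 0 := fun h => hnot g (hc g h) rfl
  by_cases hga : Transcendental k (D g / g)
  · exact ⟨g, hg0, hgl, div_mem (hK g hgK) hgK, hga⟩
  have hga' : IsAlgebraic k (D g / g) := not_not.1 hga
  have hD1 : D (g + 1) = D g := by rw [map_add, D.map_one_eq_zero, add_zero]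
  refine ⟨g + 1, hg1, hgl.add (HLin.of_mem hk k.one_mem), ?_, ?_⟩
  · exact div_mem (hK _ (add_mem hgK K.one_mem)) (add_mem hgK K.one_mem)
  · rw [hD1]
    intro ht
    apply hgt
    have : g = D g / (g + 1) * (D g / g - D g / (g + 1))⁻¹ := by
      have e : D g / g - D g / (g + 1) = D g / (g * (g + 1)) := by field_simp; ring
      rw [e]; field_simp
    rw [this]
    exact ht.mul (hga'.sub ht).inv

theorem h_finite {E : Type u} [Field E] [CharZero E] {D : Derivation ℤ E E} {k M K : Subfield E}
    (hM : ∀ x ∈ M, D x ∈ M) (hkM : k ≤ M) (hMK : M ≤ K)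
    (s : Finset E) (hs : diffGen (⇑D) k ↑s = K) (halg : ∀ x ∈ K, IsAlgebraic M x) :
    letI : Algebra ↥M ↥K := (Subfield.inclusion hMK).toAlgebra
    Module.Finite ↥M ↥K ∧ Algebra.IsAlgebraic ↥M ↥K := by
  letI : Algebra ↥M ↥K := (Subfield.inclusion hMK).toAlgebra
  have hsK : ∀ x ∈ s, x ∈ K := fun x hx => by rw [← hs]; exact subset_diffGen hx
  have hfin : FiniteDimensional M (IntermediateField.adjoin M (s : Set E)) :=
    IntermediateField.finiteDimensional_adjoin fun x hx => (halg x (hsK x hx)).isIntegral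
  have hle : K ≤ (IntermediateField.adjoin M (s : Set E)).toSubfield := by
    rw [← hs]
    refine diffGen_le ?_ (IntermediateField.subset_adjoin _ _) ?_
    · intro x hx
      exact IntermediateField.algebraMap_mem _ (⟨x, hkM hx⟩ : M)
    · intro x hx
      have : IsAlgebraic M (⟨x, hx⟩ : IntermediateField.adjoin M (s : Set E)) :=
        Algebra.IsAlgebraic.isAlgebraic _
      exact deriv_alg hM _ hx (this.algebraMap (A := E))
  let φ : K →ₗ[M] IntermediateField.adjoin M (s : Set E) :=
    { toFun := fun x => ⟨x, hle x.2⟩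
      map_add' := fun _ _ => rfl
      map_smul' := fun _ _ => rfl }
  have hφ : Function.Injective φ := fun a b h => Subtype.ext (congrArg
    (Subtype.val : IntermediateField.adjoin M (s : Set E) → E) h)
  have hfd : Module.Finite M K := Module.Finite.of_injective φ hφ
  exact ⟨hfd, Algebra.IsAlgebraic.of_finite M K⟩

/-- Let `k ⊂ K ⊆ E` be differential fields with algebraically closed field
of constants `C` of `k`, `E` a Picard–Vessiot extension of `k` and `K` `k`-irreducible.
Then there are a nonzero `y ∈ E` and a monic linear differential operator `L` over `k`
with `L(y) = 0`, `y'/y ∈ K`, and `K` a finite algebraic extension of `k⟨y'/y⟩`. -/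
theorem stmt0 {E : Type u} [Field E] [CharZero E] (D : Derivation ℤ E E)
    (k K : Subfield E)
    (hk : ∀ x ∈ k, D x ∈ k) (hK : ∀ x ∈ K, D x ∈ K)
    (hC : IsAlgClosed ↥(constantsOf D k))
    (hkK : k < K)
    (hPV : IsPV (⇑D) k ⊤)
    (hirr : IsIrred (⇑D) k K) :
    ∃ y : E, y ≠ 0 ∧
      (∃ (n : ℕ) (a : Fin n → E), (∀ i, a i ∈ k) ∧ LApply (⇑D) n a y = 0) ∧
      D y / y ∈ K ∧
      ∃ h : diffGen (⇑D) k {D y / y} ≤ K,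
        letI : Algebra ↥(diffGen (⇑D) k {D y / y}) ↥K := (Subfield.inclusion h).toAlgebra
        Module.Finite ↥(diffGen (⇑D) k {D y / y}) ↥K ∧
          Algebra.IsAlgebraic ↥(diffGen (⇑D) k {D y / y}) ↥K := by
  obtain ⟨n, a, -, -, -, hc, ha, y, -, hy, hind, hgen⟩ := hPV
  obtain ⟨⟨s, hs⟩, h1, hmax⟩ := hirr
  have hc' : ∀ x, D x = 0 → x ∈ k := fun x => hc x (Subfield.mem_top x)
  have hS : ∀ z ∈ Set.range y, HG D k z := by
    rintro _ ⟨j, rfl⟩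
    have := HG.mk' (wronskian_full hc' ha y hy hind j)
      (fun i : Fin n => if i = ⟨0, j.pos⟩ then 1 else 0)
      (fun i => by
        split_ifs
        · exact k.one_mem
        · exact k.zero_mem)
    simpa using this
  have hadj : IntermediateField.adjoin k
      (Set.range fun p : Fin n × Fin n => (⇑D)^[(p.1 : ℕ)] (y p.2)) = ⊤ := by
    set F := IntermediateField.adjoin k
      (Set.range fun p : Fin n × Fin n => (⇑D)^[(p.1 : ℕ)] (y p.2)) with hF
    have hkF : ∀ x ∈ k, x ∈ F := fun x hx => F.algebraMap_mem (⟨x, hx⟩ : k)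
    have hmem : ∀ i j : Fin n, (⇑D)^[(i : ℕ)] (y j) ∈ F := fun i j =>
      IntermediateField.subset_adjoin _ _ ⟨(i, j), rfl⟩
    have hle : diffGen (⇑D) k (Set.range y) ≤ F.toSubfield := by
      refine diffGen_le hkF ?_ ?_
      · rintro _ ⟨j, rfl⟩
        exact hmem ⟨0, j.pos⟩ j
      · intro x hx
        change x ∈ F at hx
        change D x ∈ F
        induction hx using IntermediateField.adjoin_induction with
        | mem x hx =>
          obtain ⟨⟨i, j⟩, rfl⟩ := hx
          obtain ⟨A, hA, hxA, -⟩ := wronskian_full hc' ha y hy hind j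
          rw [hxA i]
          exact sum_mem fun l _ => mul_mem (hkF _ (hA _ _)) (hmem _ _)
        | algebraMap x => exact hkF _ (hk _ x.2)
        | add x y _ _ hx hy => rw [map_add]; exact add_mem hx hy
        | inv x hx' hx =>
          by_cases h0 : x = 0
          · rw [h0, inv_zero, map_zero]; exact zero_mem F
          · rw [← one_div, deriv_div' D 1 x h0, D.map_one_eq_zero]
            exact div_mem (sub_mem (mul_mem (zero_mem F) hx') (mul_mem (one_mem F) hx))
              (mul_mem hx' hx')
        | mul x y hx' hy' hx hy =>
          rw [Derivation.leibniz, smul_eq_mul, smul_eq_mul]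
          exact add_mem (mul_mem hx' hy) (mul_mem hy' hx)
    rw [hgen] at hle
    rw [eq_top_iff]
    intro x _
    exact hle (Subfield.mem_top x)
  obtain ⟨f, hfK, hft⟩ := h_exists_trans k K h1
  obtain ⟨P, Q, hP, hQ, hQ0, hf⟩ := exists_frac hk hS hgen f
  obtain ⟨v, hv0, hvl, hvK, hvt⟩ := h_key hk hK hkK.le hc' hP hQ hQ0 hf hfK hft
  have hMK : diffGen (⇑D) k {D v / v} ≤ K :=
    diffGen_le hkK.le (Set.singleton_subset_iff.2 hvK) hK
  refine ⟨v, hv0, hvl.exists_op, hvK, hMK, ?_⟩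
  have hvM : D v / v ∈ diffGen (⇑D) k {D v / v} := subset_diffGen rfl
  have hkM : k < diffGen (⇑D) k {D v / v} := by
    refine lt_of_le_of_ne le_diffGen fun h => ?_
    have hvk : D v / v ∈ k := by rw [h]; exact hvM
    exact hvt (isAlgebraic_algebraMap (⟨_, hvk⟩ : k))
  have hdeg : trdegOf k (diffGen (⇑D) k {D v / v}) = trdegOf k K := by
    refine (hmax _ (fun x hx => deriv_diffGen hx) hkM hMK).resolve_left fun h0 => ?_
    have := trdegOf_add_one_le le_rfl hkM.le hvM hvt
    rw [h0] at this
    exact absurd this (by simp)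
  refine h_finite (fun x hx => deriv_diffGen hx) hkM.le hMK s hs fun x hx => ?_
  by_contra hx'
  have hlt := trdegOf_add_one_le hkM.le hMK hx hx'
  rw [hdeg] at hlt
  have hfin : trdegOf k K < Cardinal.aleph0 := trdegOf_lt _ (Set.finite_range _) hadj
  obtain ⟨N, hN⟩ := Cardinal.lt_aleph0.1 hfin
  rw [hN] at hlt
  have : N + 1 ≤ N := by exact_mod_cast hlt
  omega
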